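/- Let G be the parallel composition of r ≥ 2 paths of odd lengths k_1,...,k_r, and let X be the projective toric subset parameterized by G. Then reg(G) ≤ (⌊k_1/2⌋ + ... + ⌊k_r/2⌋)(q−2). -/

import Mathlib

open MvPolynomial

/-- A finite multigraph without loops: each edge `e` has two distinct endpoints
`fst e` and `snd e`.  Multiple edges with the same endpoints are allowed. -/
structure Multigraph (V E : Type) : Type where
  fst : E → V
  snd : E → V
  ne : ∀ e, fst e ≠ snd e

namespace Multigraph

variable {V E : Type}

/-- Vertex `v` is an endpoint of the edge `e`. -/
def Incident (G : Multigraph V E) (v : V) (e : E) : Prop :=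
  G.fst e = v ∨ G.snd e = v

instance (G : Multigraph V E) [DecidableEq V] (v : V) : DecidablePred (G.Incident v) :=
  fun e => inferInstanceAs (Decidable (G.fst e = v ∨ G.snd e = v))

/-- The degree of a vertex: the number of edges incident to it. -/
noncomputable def degree (G : Multigraph V E) (v : V) : ℕ :=
  Nat.card {e : E // G.Incident v e}

/-- The graph has no isolated vertices. -/
def NoIsolated (G : Multigraph V E) : Prop :=
  ∀ v : V, ∃ e : E, G.Incident v e

variable (K : Type) [Field K] [Fintype K]

/-- The point of the affine torus associated with an assignment `x` of nonzero
scalars to the vertices: its coordinate at an edge `e = {v,w}` is `x v * x w`. -/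
def point (G : Multigraph V E) (x : V → Kˣ) : E → K :=
  fun e => (x (G.fst e) : K) * (x (G.snd e) : K)

/-- The projective toric subset `X` parameterized by `G`, realized as the set of
`Kˣ`-orbits (i.e. projective points) of the points `G.point K x`, `x : V → Kˣ`. -/
def toricSet (G : Multigraph V E) : Set (Set (E → K)) :=
  Set.range fun x : V → Kˣ => MulAction.orbit Kˣ (G.point K x)

/-- The vanishing ideal `I(X)` of the projective toric subset parameterized by `G`:
the ideal of all polynomials each of whose homogeneous components vanishes at the
point `G.point K x` for every `x : V → Kˣ`. -/
def vanishingIdeal (G : Multigraph V E) : Ideal (MvPolynomial E K) where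
  carrier := {f | ∀ (x : V → Kˣ) (d : ℕ), eval (G.point K x) (homogeneousComponent d f) = 0}
  zero_mem' := by intro x d; simp
  add_mem' := by
    intro a b ha hb x d
    rw [map_add, map_add, ha x d, hb x d, add_zero]
  smul_mem' := by
    intro c f hf x n
    rw [smul_eq_mul, ← sum_homogeneousComponent f, Finset.mul_sum, map_sum, map_sum]
    refine Finset.sum_eq_zero fun d _ => ?_
    nth_rewrite 1 [← sum_homogeneousComponent c]
    rw [Finset.sum_mul, map_sum, map_sum]
    refine Finset.sum_eq_zero fun e _ => ?_
    have h1 : (homogeneousComponent e c * homogeneousComponent d f).IsHomogeneous (e + d) :=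
      (homogeneousComponent_isHomogeneous e c).mul (homogeneousComponent_isHomogeneous d f)
    rw [homogeneousComponent_of_mem ((mem_homogeneousSubmodule _ _).mpr h1)]
    split_ifs
    · rw [map_mul, hf x d, mul_zero]
    · simp

/-- The Hilbert function of `S/I(X)`: the dimension over `K` of the degree-`d`
homogeneous component of the quotient, realized as the image of the space of
degree-`d` homogeneous polynomials in the quotient. -/
noncomputable def hilbert (G : Multigraph V E) (d : ℕ) : ℕ :=
  Module.finrank K
    ((homogeneousSubmodule E K d).map (Ideal.Quotient.mkₐ K (G.vanishingIdeal K)).toLinearMap)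

/-- The regularity `reg G`: the least `d` such that the Hilbert function of `S/I(X)`
at `d` equals the number of points of `X`. -/
noncomputable def reg (G : Multigraph V E) : ℕ :=
  sInf {d : ℕ | G.hilbert K d = (G.toricSet K).ncard}

/-- The graph obtained from `G` by deleting a vertex `v` and all edges incident
to it. -/
def deleteVert (G : Multigraph V E) (v : V) :
    Multigraph {w : V // w ≠ v} {e : E // ¬ G.Incident v e} where
  fst e := ⟨G.fst e.1, fun h => e.2 (Or.inl h)⟩
  snd e := ⟨G.snd e.1, fun h => e.2 (Or.inr h)⟩
  ne e h := G.ne e.1 (congrArg Subtype.val h)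

/-- The graph obtained from `G` by identifying the vertex `v₂` with the vertex `v₁`:
the edges are the same, and every endpoint equal to `v₂` is replaced by `v₁`.
This requires that `{v₁, v₂}` is a non-edge of `G`, so that no loops are created. -/
def identifyVert [DecidableEq V] (G : Multigraph V E) (v₁ v₂ : V) (h12 : v₁ ≠ v₂)
    (h : ∀ e, ¬ (G.Incident v₁ e ∧ G.Incident v₂ e)) :
    Multigraph {w : V // w ≠ v₂} E where
  fst e := ⟨if G.fst e = v₂ then v₁ else G.fst e, by split_ifs with hh; exacts [h12, hh]⟩
  snd e := ⟨if G.snd e = v₂ then v₁ else G.snd e, by split_ifs with hh; exacts [h12, hh]⟩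
  ne := by
    intro e heq
    rw [Subtype.ext_iff] at heq
    simp only at heq
    split_ifs at heq with h1 h2 h2
    · exact G.ne e (h1.trans h2.symm)
    · exact h e ⟨Or.inr heq.symm, Or.inl h1⟩
    · exact h e ⟨Or.inl heq, Or.inr h2⟩
    · exact G.ne e heq

/-- The subgraph of `G` determined by a set `A` of edges of `G`, together with all
endpoints of those edges (so it has no isolated vertices). -/
def subgraph [DecidableEq V] (G : Multigraph V E) (A : Finset E) :
    Multigraph {v : V // ∃ e ∈ A, G.Incident v e} {e : E // e ∈ A} where
  fst e := ⟨G.fst e.1, e.1, e.2, Or.inl rfl⟩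
  snd e := ⟨G.snd e.1, e.1, e.2, Or.inr rfl⟩
  ne e h := G.ne e.1 (congrArg Subtype.val h)

end Multigraph

/-- The vertex of the parallel composition of paths of lengths `k i` lying on the
`i`-th path at distance `j` from the common initial vertex:  `j = 0` gives the common
initial vertex, `j = k i` the common terminal vertex, and `0 < j < k i` gives the
`j`-th interior vertex of the `i`-th path. -/
def pcVert {ι : Type} (k : ι → ℕ) (i : ι) (j : ℕ) :
    Bool ⊕ ((i : ι) × Fin (k i - 1)) :=
  if h0 : j = 0 then Sum.inl false
  else if h : j < k i then Sum.inr ⟨i, ⟨j - 1, by omega⟩⟩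
  else Sum.inl true

/-- The parallel composition of the family of paths `P i` of lengths `k i` (`i : ι`):
the `i`-th path has `k i` edges indexed by `Fin (k i)`, its `j`-th edge joining the
vertices of the `i`-th path at distances `j` and `j + 1` from the common initial
vertex.  All the initial vertices of the paths are identified to a single vertex and
all the terminal vertices are identified to a single vertex. -/
def parallelComp {ι : Type} (k : ι → ℕ) :
    Multigraph (Bool ⊕ ((i : ι) × Fin (k i - 1))) ((i : ι) × Fin (k i)) where
  fst e := pcVert k e.1 e.2.1
  snd e := pcVert k e.1 (e.2.1 + 1)
  ne := by
    rintro ⟨i, j⟩ h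
    have hj := j.2
    simp only [pcVert] at h
    split_ifs at h <;> simp_all <;> omega

/-- The monomial `f i`: the product of the edges of the `i`-th path of the parallel
composition in odd positions (positions `1, 3, 5, ...`, i.e. indices `0, 2, 4, ...`). -/
noncomputable def oddProd {ι : Type} (K : Type) [Field K] (k : ι → ℕ) (i : ι) :
    MvPolynomial ((i : ι) × Fin (k i)) K :=
  ∏ m : Fin ((k i + 1) / 2), X ⟨i, ⟨2 * m.1, by have := m.2; omega⟩⟩

/-- The monomial `g i`: the product of the edges of the `i`-th path of the parallel
composition in even positions (positions `2, 4, 6, ...`, i.e. indices `1, 3, 5, ...`). -/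
noncomputable def evenProd {ι : Type} (K : Type) [Field K] (k : ι → ℕ) (i : ι) :
    MvPolynomial ((i : ι) × Fin (k i)) K :=
  ∏ m : Fin (k i / 2), X ⟨i, ⟨2 * m.1 + 1, by have := m.2; omega⟩⟩

/-!
Let `n = q - 1`. Evaluations at distinct points of `X` are distinct, hence linearly
independent, characters of the monoid of homogeneous polynomials of degree divisible by `n`. It
follows that the homogeneous polynomials of degree congruent to `d` modulo `n` span the space of
functions on `X`. So `reg G ≤ d` as soon as every monomial of
degree congruent to `d` agrees on `X` with a monomial of degree at most `d` in the same class.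

For the parallel composition, changing the exponents along the `i`-th path by `c i` with alternating
signs multiplies a monomial by `(x_s x_t) ^ c i`, where `s` and `t` are the common end vertices, so
shifts with `∑ c i = 0` preserve its values on `X`. With all exponents reduced modulo `n`, a path of
length `2m + 1` has total degree at most `m (n - 1)` for a suitable shift, and two paths whose
shifts have a prescribed sum have total degree at most `(m + m' + 1)(n - 1)` for a suitable choice.
Hence some shift with sum zero brings the degree below `d + n`, where `d = (∑ ⌊k i / 2⌋)(n - 1)`,
and therefore, by the congruence, to at most `d`.
-/

namespace ParallelPaths

section Evaluation

variable {T E R : Type*} [CommSemiring R]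

/-- Evaluation of polynomials at a family `p` of points of affine space, as an algebra
homomorphism into the functions on the index set of the family. -/
noncomputable def evalFamily (p : T → E → R) : MvPolynomial E R →ₐ[R] T → R :=
  aeval fun e x => p x e

@[simp]
lemma evalFamily_apply (p : T → E → R) (f : MvPolynomial E R) (x : T) :
    evalFamily p f x = eval (p x) f := by
  induction f using MvPolynomial.induction_on with
  | C c => simp [evalFamily]
  | add f g hf hg => simp only [map_add, Pi.add_apply, hf, hg]
  | mul_X f e hf => simp only [map_mul, Pi.mul_apply, hf]; simp [evalFamily]

lemma eval_smul_of_isHomogeneous {f : MvPolynomial E R} {d : ℕ} (hf : f.IsHomogeneous d)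
    (c : R) (p : E → R) : eval (c • p) f = c ^ d * eval p f := by
  rw [eval_eq, eval_eq, Finset.mul_sum]
  refine Finset.sum_congr rfl fun a ha => ?_
  have degree_a : ∑ e ∈ a.support, a e = d := by
    rw [← Finsupp.degree_apply, Finsupp.degree_eq_weight_one]
    exact hf (mem_support_iff.mp ha)
  simp only [Pi.smul_apply, smul_eq_mul, mul_pow, Finset.prod_mul_distrib,
    Finset.prod_pow_eq_pow_sum, degree_a]
  ring

/-- The multiplicative monoid of homogeneous polynomials whose degree is a multiple of `n`. -/
def homogeneousSubmonoid (E R : Type*) [CommSemiring R] (n : ℕ) : Submonoid (MvPolynomial E R) where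
  carrier := {f | ∃ m, n ∣ m ∧ f.IsHomogeneous m}
  one_mem' := ⟨0, dvd_zero n, isHomogeneous_one E R⟩
  mul_mem' := by
    rintro f g ⟨l, hl, hf⟩ ⟨m, hm, hg⟩
    exact ⟨l + m, dvd_add hl hm, hf.mul hg⟩

end Evaluation

section Interpolation

variable {T E K : Type*} [Field K]

lemma orbit_eq_of_eval_eq {n : ℕ} (hn : n ≠ 0) {p p' : E → K} {e₀ : E} (hp : p e₀ ≠ 0)
    (hp' : p' e₀ ≠ 0) (h : ∀ f ∈ homogeneousSubmonoid E K n, eval p f = eval p' f) :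
    MulAction.orbit Kˣ p = MulAction.orbit Kˣ p' := by
  have coord_eq (e : E) : p e * p e₀ ^ (n - 1) = p' e * p' e₀ ^ (n - 1) := by
    have hom : (X e * X e₀ ^ (n - 1) : MvPolynomial E K).IsHomogeneous n := by
      simpa only [Nat.add_sub_cancel' (Nat.one_le_iff_ne_zero.mpr hn)] using
        (isHomogeneous_X K e).mul (isHomogeneous_X_pow e₀ (n - 1))
    simpa only [map_mul, map_pow, eval_X] using h _ ⟨n, dvd_rfl, hom⟩
  let u : Kˣ := Units.mk0 (p e₀ ^ (n - 1)) (pow_ne_zero _ hp)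
  let u' : Kˣ := Units.mk0 (p' e₀ ^ (n - 1)) (pow_ne_zero _ hp')
  have smul_eq : u • p = u' • p' := by
    funext e
    simpa only [Pi.smul_apply, Units.smul_def, smul_eq_mul, u, u', Units.val_mk0, mul_comm]
      using coord_eq e
  rw [← MulAction.orbit_smul u p, smul_eq, MulAction.orbit_smul]

lemma linearIndependent_eval_homogeneousSubmonoid {n : ℕ} (hn : n ≠ 0) {p : T → E → K}
    {e₀ : E} (hp : ∀ x, p x e₀ ≠ 0) (hinj : Function.Injective fun x => MulAction.orbit Kˣ (p x)) :
    LinearIndependent K fun (x : T) (f : homogeneousSubmonoid E K n) => eval (p x) f.1 := by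
  let χ (x : T) : homogeneousSubmonoid E K n →* K :=
    (eval (p x) : MvPolynomial E K →* K).comp (homogeneousSubmonoid E K n).subtype
  have χ_injective : Function.Injective χ := fun x y hxy => hinj <|
    orbit_eq_of_eval_eq hn (hp x) (hp y) fun f hf => DFunLike.congr_fun hxy ⟨f, hf⟩
  exact (linearIndependent_monoidHom _ K).comp χ χ_injective

/-- Characters are linearly independent, so the matrix of their values has full rank; the
factor `X e₀ ^ d` moves the degrees from the class of `0` to the class of `d`. -/
lemma span_evalFamily_homogeneous_eq_top [Finite T] {n : ℕ} (hn : n ≠ 0) (d : ℕ)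
    {p : T → E → K} {e₀ : E} (hp : ∀ x, p x e₀ ≠ 0)
    (hinj : Function.Injective fun x => MulAction.orbit Kˣ (p x)) :
    Submodule.span K (evalFamily p '' {f | ∃ m, m ≡ d [MOD n] ∧ f.IsHomogeneous m}) = ⊤ := by
  have indep := (linearIndependent_eval_homogeneousSubmonoid hn hp hinj).units_smul
    fun x => Units.mk0 (p x e₀ ^ d) (pow_ne_zero d (hp x))
  rw [eq_top_iff, ← span_flip_eq_top_iff_linearIndependent.mpr indep]
  refine Submodule.span_mono ?_
  rintro _ ⟨⟨f, m, hm, hf⟩, rfl⟩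
  refine ⟨X e₀ ^ d * f, ⟨d + m, ?_, (isHomogeneous_X_pow e₀ d).mul hf⟩, ?_⟩
  · simpa using (Nat.modEq_zero_iff_dvd.mpr hm).add_left d
  · funext x
    simp [flip, Units.smul_def]

theorem map_evalFamily_homogeneousSubmodule_eq_top [Finite T] {n : ℕ} (hn : n ≠ 0) {d : ℕ}
    {p : T → E → K} {e₀ : E} (hp : ∀ x, p x e₀ ≠ 0)
    (hinj : Function.Injective fun x => MulAction.orbit Kˣ (p x))
    (h : ∀ a : E →₀ ℕ, a.degree ≡ d [MOD n] → ∃ b : E →₀ ℕ, b.degree = d ∧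
      ∀ x, eval (p x) (monomial a 1) = eval (p x) (monomial b 1)) :
    (homogeneousSubmodule E K d).map (evalFamily p).toLinearMap = ⊤ := by
  rw [eq_top_iff, ← span_evalFamily_homogeneous_eq_top hn d hp hinj, Submodule.span_le]
  rintro _ ⟨f, ⟨m, hm, hf⟩, rfl⟩
  rw [f.as_sum, map_sum]
  refine Submodule.sum_mem _ fun a ha => ?_
  have degree_a : a.degree = m := by
    rw [Finsupp.degree_eq_weight_one]
    exact hf (mem_support_iff.mp ha)
  obtain ⟨b, degree_b, hab⟩ := h a (degree_a ▸ hm)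
  refine ⟨monomial b (coeff a f), isHomogeneous_monomial _ degree_b, ?_⟩
  funext x
  have prod_eq := hab x
  simp only [eval_monomial, one_mul] at prod_eq
  simp [eval_monomial, prod_eq]

end Interpolation

lemma finrank_map_eq_finrank_map {R M N P : Type*} [Ring R] [AddCommGroup M] [Module R M]
    [AddCommGroup N] [Module R N] [AddCommGroup P] [Module R P] (H : Submodule R M)
    (f : M →ₗ[R] N) (g : M →ₗ[R] P) (h : ∀ x ∈ H, f x = 0 ↔ g x = 0) :
    Module.finrank R (H.map f) = Module.finrank R (H.map g) := by
  have ker_eq : LinearMap.ker (f.domRestrict H) = LinearMap.ker (g.domRestrict H) := by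
    ext x
    exact h x x.2
  rw [← LinearMap.range_domRestrict, ← LinearMap.range_domRestrict]
  exact ((f.domRestrict H).quotKerEquivRange.symm.trans
    ((Submodule.quotEquivOfEq _ _ ker_eq).trans (g.domRestrict H).quotKerEquivRange)).finrank_eq

end ParallelPaths

namespace Multigraph

open ParallelPaths

section Regularity

variable {V E K : Type} [Field K]

lemma point_ne_zero (G : Multigraph V E) (x : V → Kˣ) (e : E) : G.point K x e ≠ 0 :=
  mul_ne_zero (x _).ne_zero (x _).ne_zero

lemma eval_point_monomial [Fintype E] (G : Multigraph V E) (x : V → Kˣ) (a : E →₀ ℕ) :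
    eval (G.point K x) (monomial a 1) =
      (∑ e, a e • (Additive.ofMul (x (G.fst e)) + Additive.ofMul (x (G.snd e)))).toMul := by
  simp [eval_monomial, Finsupp.prod_fintype, point, mul_pow]

lemma mem_vanishingIdeal_iff_of_isHomogeneous (G : Multigraph V E) {f : MvPolynomial E K}
    {d : ℕ} (hf : f.IsHomogeneous d) :
    f ∈ G.vanishingIdeal K ↔ ∀ x : V → Kˣ, eval (G.point K x) f = 0 := by
  constructor
  · intro h x
    simpa only [homogeneousComponent_of_mem hf, if_true] using h x d
  · intro h x m
    rw [homogeneousComponent_of_mem hf]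
    split_ifs
    · exact h x
    · exact map_zero _

/-- A point of the torus representing a projective point of the toric set. -/
noncomputable def toricRep (G : Multigraph V E) (t : G.toricSet K) : E → K :=
  G.point K t.2.choose

lemma orbit_toricRep (G : Multigraph V E) (t : G.toricSet K) :
    MulAction.orbit Kˣ (G.toricRep t) = t :=
  t.2.choose_spec

lemma mem_vanishingIdeal_iff_evalFamily_toricRep_eq_zero (G : Multigraph V E)
    {f : MvPolynomial E K} {d : ℕ} (hf : f.IsHomogeneous d) :
    f ∈ G.vanishingIdeal K ↔ evalFamily (G.toricRep (K := K)) f = 0 := by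
  rw [G.mem_vanishingIdeal_iff_of_isHomogeneous hf, funext_iff]
  simp only [evalFamily_apply, Pi.zero_apply]
  refine ⟨fun h t => h _, fun h x => ?_⟩
  let t : G.toricSet K := ⟨MulAction.orbit Kˣ (G.point K x), x, rfl⟩
  obtain ⟨c, hc⟩ : G.point K x ∈ MulAction.orbit Kˣ (G.toricRep t) := by
    rw [G.orbit_toricRep t]
    exact MulAction.mem_orbit_self _
  have point_eq : G.point K x = (c : K) • G.toricRep t := hc.symm
  rw [point_eq, eval_smul_of_isHomogeneous hf, h t, mul_zero]

variable (K) in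
lemma hilbert_eq_finrank_map_evalFamily (G : Multigraph V E) (d : ℕ) :
    G.hilbert K d = Module.finrank K ((homogeneousSubmodule E K d).map
      (evalFamily (G.toricRep (K := K))).toLinearMap) :=
  finrank_map_eq_finrank_map _ _ _ fun _ hf =>
    Ideal.Quotient.eq_zero_iff_mem.trans
      (G.mem_vanishingIdeal_iff_evalFamily_toricRep_eq_zero hf)

/-- A power of a single edge makes up for the missing degree, a multiple of `q - 1`. -/
lemma exists_degree_eq_eval_point_monomial_eq [Fintype K] [Nonempty E] (G : Multigraph V E)
    {d : ℕ} {b : E →₀ ℕ} (hle : b.degree ≤ d) (hmod : b.degree ≡ d [MOD Fintype.card K - 1]) :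
    ∃ b' : E →₀ ℕ, b'.degree = d ∧ ∀ x : V → Kˣ,
      eval (G.point K x) (monomial b 1) = eval (G.point K x) (monomial b' 1) := by
  obtain ⟨t, ht⟩ := (Nat.modEq_iff_dvd' hle).mp hmod
  let e₀ : E := Classical.arbitrary E
  refine ⟨b + Finsupp.single e₀ ((Fintype.card K - 1) * t), ?_, fun x => ?_⟩
  · rw [map_add, Finsupp.degree_single]
    omega
  · have pow_eq_one : G.point K x e₀ ^ ((Fintype.card K - 1) * t) = 1 := by
      rw [pow_mul, FiniteField.pow_card_sub_one_eq_one _ (G.point_ne_zero x e₀), one_pow]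
    rw [monomial_add_single, map_mul, map_pow, eval_X, pow_eq_one, mul_one]

theorem reg_le_of_forall_exists_degree_le [Finite V] [Fintype K] [Nonempty E]
    (G : Multigraph V E) {d : ℕ}
    (h : ∀ a : E →₀ ℕ, a.degree ≡ d [MOD Fintype.card K - 1] →
      ∃ b : E →₀ ℕ, b.degree ≤ d ∧ b.degree ≡ d [MOD Fintype.card K - 1] ∧
        ∀ x : V → Kˣ, eval (G.point K x) (monomial a 1) = eval (G.point K x) (monomial b 1)) :
    G.reg K ≤ d := by
  have : Finite (G.toricSet K) := Set.finite_range _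
  have card_sub_one_ne_zero : Fintype.card K - 1 ≠ 0 :=
    Nat.sub_ne_zero_of_lt Fintype.one_lt_card
  have map_eq_top : (homogeneousSubmodule E K d).map
      (evalFamily (G.toricRep (K := K))).toLinearMap = ⊤ := by
    refine map_evalFamily_homogeneousSubmodule_eq_top card_sub_one_ne_zero
      (fun t => G.point_ne_zero _ (Classical.arbitrary E)) ?_ fun a ha => ?_
    · simp only [orbit_toricRep]
      exact Subtype.val_injective
    · obtain ⟨b, hle, hmod, hab⟩ := h a ha
      obtain ⟨b', degree_b', hbb'⟩ :=
        G.exists_degree_eq_eval_point_monomial_eq (K := K) hle hmod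
      exact ⟨b', degree_b', fun t => (hab _).trans (hbb' _)⟩
  have := Fintype.ofFinite (G.toricSet K)
  refine Nat.sInf_le ?_
  rw [Set.mem_ofPred_eq, hilbert_eq_finrank_map_evalFamily, map_eq_top, finrank_top,
    Module.finrank_fintype_fun_eq_card, ← Nat.card_eq_fintype_card, Nat.card_coe_set_eq]

end Regularity

end Multigraph

namespace ParallelPaths

/-- The exponents `a` of the edges of a path, changed by `c` with alternating signs. On a path of
odd length this multiplies the monomial by the `c`-th power of the product of its end vertices. -/
def alternatingShift {R : Type*} [Ring R] {k : ℕ} (a : Fin k → R) (c : R) : Fin k → R :=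
  fun j => a j + (-1) ^ (j : ℕ) * c

/-- Each path `i` of a family of paths undergoes the alternating shift by `c i`. -/
def pathwiseShift {R ι : Type*} [Ring R] {k : ι → ℕ} (a : (i : ι) × Fin (k i) → R) (c : ι → R) :
    (i : ι) × Fin (k i) → R :=
  fun e => alternatingShift (fun j => a ⟨e.1, j⟩) (c e.1) e.2

/-- The degree of the monomial whose exponents are the least residues `0, …, n - 1` of `a`. -/
def residueSum {n : ℕ} {κ : Type*} [Fintype κ] (a : κ → ZMod n) : ℕ :=
  ∑ j, (a j).val

lemma sum_alternatingShift {R : Type*} [Ring R] {k : ℕ} (hk : Odd k) (a : Fin k → R) (c : R) :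
    ∑ j, alternatingShift a c j = ∑ j, a j + c := by
  simp only [alternatingShift, Finset.sum_add_distrib, ← Finset.sum_mul, Fin.sum_neg_one_pow,
    if_neg (Nat.not_even_iff_odd.mpr hk), one_mul]

lemma sum_pathwiseShift {R ι : Type*} [Ring R] [Fintype ι] {k : ι → ℕ} (hk : ∀ i, Odd (k i))
    (a : (i : ι) × Fin (k i) → R) (c : ι → R) :
    ∑ e, pathwiseShift a c e = ∑ e, a e + ∑ i, c i := by
  simp only [Fintype.sum_sigma, pathwiseShift, sum_alternatingShift (hk _),
    Finset.sum_add_distrib]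

section Averaging

variable {n : ℕ} [NeZero n]

lemma natCast_residueSum {κ : Type*} [Fintype κ] (a : κ → ZMod n) :
    (residueSum a : ZMod n) = ∑ j, a j := by
  simp only [residueSum, Nat.cast_sum, ZMod.natCast_zmod_val]

lemma two_mul_sum_zmod_val (n : ℕ) [NeZero n] : 2 * ∑ c : ZMod n, c.val = n * (n - 1) := by
  obtain ⟨m, rfl⟩ := Nat.exists_eq_succ_of_ne_zero (NeZero.ne n)
  have sum_eq : ∑ c : ZMod (m + 1), c.val = ∑ i ∈ Finset.range (m + 1), i :=
    Fin.sum_univ_eq_sum_range (fun i => i) (m + 1)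
  rw [sum_eq, mul_comm, Finset.sum_range_id_mul_two]

lemma two_mul_sum_residueSum_alternatingShift {k : ℕ} (a : Fin k → ZMod n) :
    2 * ∑ c, residueSum (alternatingShift a c) = k * (n * (n - 1)) := by
  have sum_shift (j : Fin k) :
      ∑ c : ZMod n, (alternatingShift a c j).val = ∑ c : ZMod n, c.val := by
    unfold alternatingShift
    rcases neg_one_pow_eq_or (ZMod n) j with h | h
    · simpa only [h, one_mul, Equiv.coe_addLeft] using
        Equiv.sum_comp (Equiv.addLeft (a j)) ZMod.val
    · simpa only [h, neg_one_mul, ← sub_eq_add_neg, Equiv.subLeft_apply] using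
        Equiv.sum_comp (Equiv.subLeft (a j)) ZMod.val
  simp only [residueSum]
  rw [Finset.sum_comm, Fintype.sum_congr _ _ sum_shift, Finset.sum_const, Finset.card_univ,
    Fintype.card_fin, smul_eq_mul, ← two_mul_sum_zmod_val]
  ring

lemma mul_add_sum_val_le_sum_of_bijective {f : ZMod n → ℕ} {B : ℕ}
    (hf : Function.Bijective fun c => (f c : ZMod n)) (hB : ∀ c, B ≤ f c) :
    n * B + ∑ c : ZMod n, c.val ≤ ∑ c, f c := by
  have sub_bijective : Function.Bijective fun c => (f c : ZMod n) - B :=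
    (Equiv.subRight (B : ZMod n)).bijective.comp hf
  calc n * B + ∑ c : ZMod n, c.val
      = ∑ c, (B + ((f c : ZMod n) - B).val) := by
        rw [Finset.sum_add_distrib, sub_bijective.sum_comp ZMod.val, Finset.sum_const,
          Finset.card_univ, ZMod.card, smul_eq_mul]
    _ ≤ ∑ c, f c := Finset.sum_le_sum fun c _ => by
        rw [← Nat.cast_sub (hB c), ZMod.val_natCast, ← Nat.le_sub_iff_add_le' (hB c)]
        exact Nat.mod_le _ _

/-- The residue sums of the `n` shifts average to `k * (n - 1) / 2` and lie in distinct classes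
modulo `n`, so the least of them is at least `(n - 1) / 2` below the average. -/
lemma exists_residueSum_alternatingShift_le {k : ℕ} (hk : Odd k) (a : Fin k → ZMod n) :
    ∃ c, residueSum (alternatingShift a c) ≤ k / 2 * (n - 1) := by
  by_contra! hlt
  have bijective : Function.Bijective
      fun c => (residueSum (alternatingShift a c) : ZMod n) := by
    simp only [natCast_residueSum, sum_alternatingShift hk]
    exact (Equiv.addLeft (∑ j, a j)).bijective
  have lower_bound := mul_add_sum_val_le_sum_of_bijective bijective hlt
  have total := two_mul_sum_residueSum_alternatingShift a
  have total_val := two_mul_sum_zmod_val n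
  have n_pos := NeZero.pos n
  obtain ⟨m, rfl⟩ := hk
  rw [show (2 * m + 1) / 2 = m by omega, Nat.succ_eq_add_one] at lower_bound
  linarith

lemma exists_residueSum_alternatingShift_add_le {k l : ℕ} (hk : Odd k) (hl : Odd l)
    (a : Fin k → ZMod n) (b : Fin l → ZMod n) (s : ZMod n) :
    ∃ c, residueSum (alternatingShift a c) + residueSum (alternatingShift b (s - c)) ≤
      (k / 2 + l / 2 + 1) * (n - 1) := by
  have total_a := two_mul_sum_residueSum_alternatingShift a
  have total_b := two_mul_sum_residueSum_alternatingShift b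
  rw [← Equiv.sum_comp (Equiv.subLeft s)] at total_b
  simp only [Equiv.subLeft_apply] at total_b
  obtain ⟨c, -, hc⟩ : ∃ c ∈ Finset.univ,
      residueSum (alternatingShift a c) + residueSum (alternatingShift b (s - c)) ≤
        (k / 2 + l / 2 + 1) * (n - 1) := by
    refine Finset.exists_le_of_sum_le Finset.univ_nonempty ?_
    rw [Finset.sum_add_distrib, Finset.sum_const, Finset.card_univ, ZMod.card, smul_eq_mul]
    obtain ⟨m, rfl⟩ := hk
    obtain ⟨m', rfl⟩ := hl
    rw [show (2 * m + 1) / 2 = m by omega, show (2 * m' + 1) / 2 = m' by omega]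
    linarith
  exact ⟨c, hc⟩

variable {ι : Type*} [Fintype ι] [Nontrivial ι] {k : ι → ℕ}

/-- All paths but two are shifted optimally; the shifts of the remaining two are tied by the
condition on the sum, which costs `n - 1` on average. -/
lemma exists_residueSum_pathwiseShift_le_add (hk : ∀ i, Odd (k i))
    (a : (i : ι) × Fin (k i) → ZMod n) :
    ∃ c : ι → ZMod n, ∑ i, c i = 0 ∧
      residueSum (pathwiseShift a c) ≤ (∑ i, k i / 2) * (n - 1) + (n - 1) := by
  classical
  let cost (i : ι) (c : ZMod n) : ℕ := residueSum (alternatingShift (fun j => a ⟨i, j⟩) c)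
  obtain ⟨i₁, i₂, hne⟩ := exists_pair_ne ι
  choose c₀ hc₀ using fun i => exists_residueSum_alternatingShift_le (hk i) fun j => a ⟨i, j⟩
  obtain ⟨x, hx⟩ := exists_residueSum_alternatingShift_add_le (hk i₁) (hk i₂)
    (fun j => a ⟨i₁, j⟩) (fun j => a ⟨i₂, j⟩) (-∑ i ∈ {i₁, i₂}ᶜ, c₀ i)
  let c := Function.update (Function.update c₀ i₁ x) i₂ (-∑ i ∈ {i₁, i₂}ᶜ, c₀ i - x)
  have c_i₁ : c i₁ = x := by simp [c, hne]
  have c_i₂ : c i₂ = -∑ i ∈ {i₁, i₂}ᶜ, c₀ i - x := by simp [c]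
  have c_of_mem (i : ι) (hi : i ∈ ({i₁, i₂} : Finset ι)ᶜ) : c i = c₀ i := by
    simp only [Finset.mem_compl, Finset.mem_insert, Finset.mem_singleton, not_or] at hi
    simp [c, hi]
  refine ⟨c, ?_, ?_⟩
  · rw [← Finset.sum_add_sum_compl {i₁, i₂} c, Finset.sum_pair hne, c_i₁, c_i₂,
      Finset.sum_congr rfl c_of_mem]
    ring
  · have cost_compl : ∑ i ∈ {i₁, i₂}ᶜ, cost i (c i) ≤ (∑ i ∈ {i₁, i₂}ᶜ, k i / 2) * (n - 1) := by
      rw [Finset.sum_mul]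
      exact Finset.sum_le_sum fun i hi => (c_of_mem i hi).symm ▸ hc₀ i
    calc residueSum (pathwiseShift a c)
        = ∑ i, cost i (c i) := Fintype.sum_sigma _
      _ = cost i₁ x + cost i₂ (-∑ i ∈ {i₁, i₂}ᶜ, c₀ i - x) +
            ∑ i ∈ {i₁, i₂}ᶜ, cost i (c i) := by
          rw [← Finset.sum_add_sum_compl {i₁, i₂}, Finset.sum_pair hne, c_i₁, c_i₂]
      _ ≤ (k i₁ / 2 + k i₂ / 2 + 1) * (n - 1) + (∑ i ∈ {i₁, i₂}ᶜ, k i / 2) * (n - 1) :=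
          add_le_add hx cost_compl
      _ = (∑ i, k i / 2) * (n - 1) + (n - 1) := by
          rw [← Finset.sum_add_sum_compl {i₁, i₂} fun i => k i / 2, Finset.sum_pair hne]
          ring

lemma exists_residueSum_pathwiseShift_le (hk : ∀ i, Odd (k i))
    (a : (i : ι) × Fin (k i) → ZMod n)
    (ha : ∑ e, a e = ((∑ i, k i / 2) * (n - 1) : ℕ)) :
    ∃ c : ι → ZMod n, ∑ i, c i = 0 ∧
      residueSum (pathwiseShift a c) ≤ (∑ i, k i / 2) * (n - 1) := by
  obtain ⟨c, hc, hle⟩ := exists_residueSum_pathwiseShift_le_add hk a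
  have modEq : residueSum (pathwiseShift a c) ≡ (∑ i, k i / 2) * (n - 1) [MOD n] := by
    rw [← ZMod.natCast_eq_natCast_iff, natCast_residueSum, sum_pathwiseShift hk, hc, add_zero, ha]
  have n_pos := NeZero.pos n
  exact ⟨c, hc, modEq.le_of_lt_add (by omega)⟩

end Averaging

section Telescoping

variable {R M : Type*} [Ring R] [AddCommGroup M] [Module R M]

lemma sum_neg_one_pow_smul_add_succ (w : ℕ → M) (k : ℕ) :
    ∑ j : Fin k, (-1 : R) ^ (j : ℕ) • (w j + w (j + 1)) = w 0 - (-1 : R) ^ k • w k := by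
  rw [Fin.sum_univ_eq_sum_range fun j => (-1 : R) ^ j • (w j + w (j + 1))]
  calc ∑ j ∈ Finset.range k, (-1 : R) ^ j • (w j + w (j + 1))
      = ∑ j ∈ Finset.range k, ((-1 : R) ^ j • w j - (-1 : R) ^ (j + 1) • w (j + 1)) :=
        Finset.sum_congr rfl fun j _ => by
          rw [pow_succ, mul_neg_one, neg_smul, sub_neg_eq_add, smul_add]
    _ = w 0 - (-1 : R) ^ k • w k := by
        rw [Finset.sum_range_sub' fun j => (-1 : R) ^ j • w j, pow_zero, one_smul]

variable {ι : Type} {k : ι → ℕ}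

lemma sum_neg_one_pow_smul_path (i : ι) (hk : Odd (k i))
    (w : Bool ⊕ ((i : ι) × Fin (k i - 1)) → M) :
    ∑ j : Fin (k i), (-1 : R) ^ (j : ℕ) •
        (w ((parallelComp k).fst ⟨i, j⟩) + w ((parallelComp k).snd ⟨i, j⟩)) =
      w (Sum.inl false) + w (Sum.inl true) := by
  have initial : pcVert k i 0 = Sum.inl false := by simp [pcVert]
  have terminal : pcVert k i (k i) = Sum.inl true := by simp [pcVert, hk.pos.ne']
  refine (sum_neg_one_pow_smul_add_succ (fun j => w (pcVert k i j)) (k i)).trans ?_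
  rw [initial, terminal, hk.neg_one_pow, neg_one_smul, sub_neg_eq_add]

lemma sum_pathwiseShift_smul_parallelComp [Fintype ι] (hk : ∀ i, Odd (k i))
    (a : (i : ι) × Fin (k i) → R) (c : ι → R) (w : Bool ⊕ ((i : ι) × Fin (k i - 1)) → M) :
    ∑ e, pathwiseShift a c e • (w ((parallelComp k).fst e) + w ((parallelComp k).snd e)) =
      ∑ e, a e • (w ((parallelComp k).fst e) + w ((parallelComp k).snd e)) +
        (∑ i, c i) • (w (Sum.inl false) + w (Sum.inl true)) := by
  simp only [pathwiseShift, alternatingShift, add_smul (a _), Finset.sum_add_distrib]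
  congr 1
  rw [Fintype.sum_sigma, Finset.sum_smul]
  refine Finset.sum_congr rfl fun i _ => ?_
  simp only [((Commute.neg_one_left (c i)).pow_left _).eq, mul_smul, ← Finset.smul_sum]
  rw [sum_neg_one_pow_smul_path i (hk i)]

lemma sum_val_pathwiseShift_nsmul_parallelComp [Fintype ι] {n : ℕ} [NeZero n]
    [Module (ZMod n) M] (hk : ∀ i, Odd (k i)) (a : (i : ι) × Fin (k i) → ℕ) {c : ι → ZMod n}
    (hc : ∑ i, c i = 0) (w : Bool ⊕ ((i : ι) × Fin (k i - 1)) → M) :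
    ∑ e, (pathwiseShift (fun e => (a e : ZMod n)) c e).val •
        (w ((parallelComp k).fst e) + w ((parallelComp k).snd e)) =
      ∑ e, a e • (w ((parallelComp k).fst e) + w ((parallelComp k).snd e)) := by
  simp only [← Nat.cast_smul_eq_nsmul (ZMod n), ZMod.natCast_zmod_val]
  rw [sum_pathwiseShift_smul_parallelComp hk, hc, zero_smul, add_zero]

end Telescoping

/-- The unit group of a field with `q` elements has exponent dividing `q - 1`, so that exponents
of its elements may be read in `ZMod (q - 1)`. -/
abbrev unitsZModModule (K : Type) [Field K] [Fintype K] :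
    Module (ZMod (Fintype.card K - 1)) (Additive Kˣ) :=
  AddCommGroup.zmodModule fun u => congrArg Additive.ofMul <|
    show u.toMul ^ (Fintype.card K - 1) = 1 by
      classical rw [← Fintype.card_units, pow_card_eq_one]

lemma exists_degree_le_eval_parallelComp_eq {K ι : Type} [Field K] [Fintype K] [Fintype ι]
    [Nontrivial ι] {k : ι → ℕ} (hk : ∀ i, Odd (k i)) (a : (i : ι) × Fin (k i) →₀ ℕ)
    (ha : a.degree ≡ (∑ i, k i / 2) * (Fintype.card K - 2) [MOD Fintype.card K - 1]) :
    ∃ b : (i : ι) × Fin (k i) →₀ ℕ, b.degree ≤ (∑ i, k i / 2) * (Fintype.card K - 2) ∧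
      b.degree ≡ (∑ i, k i / 2) * (Fintype.card K - 2) [MOD Fintype.card K - 1] ∧
      ∀ x, eval ((parallelComp k).point K x) (monomial a 1) =
        eval ((parallelComp k).point K x) (monomial b 1) := by
  have : NeZero (Fintype.card K - 1) := ⟨Nat.sub_ne_zero_of_lt Fintype.one_lt_card⟩
  let := unitsZModModule K
  let α : (i : ι) × Fin (k i) → ZMod (Fintype.card K - 1) := fun e => a e
  have sum_α : ∑ e, α e = ((∑ i, k i / 2) * (Fintype.card K - 2) : ℕ) := by
    rw [← (ZMod.natCast_eq_natCast_iff _ _ _).mpr ha, Finsupp.degree_eq_sum, Nat.cast_sum]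
  obtain ⟨c, hc, hle⟩ := exists_residueSum_pathwiseShift_le hk α sum_α
  let b : (i : ι) × Fin (k i) →₀ ℕ :=
    Finsupp.equivFunOnFinite.symm fun e => (pathwiseShift α c e).val
  have degree_b : b.degree = residueSum (pathwiseShift α c) := Finsupp.degree_eq_sum b
  refine ⟨b, degree_b.trans_le hle, ?_, fun x => ?_⟩
  · rw [← ZMod.natCast_eq_natCast_iff, degree_b, natCast_residueSum, sum_pathwiseShift hk, hc,
      add_zero, sum_α]
  · rw [Multigraph.eval_point_monomial, Multigraph.eval_point_monomial]
    exact congrArg (fun u : Additive Kˣ => (u.toMul : K))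
      (sum_val_pathwiseShift_nsmul_parallelComp hk a hc fun v => Additive.ofMul (x v)).symm

end ParallelPaths

theorem reg_parallelComp_odd_upper_bound_general (K : Type) [Field K] [Fintype K] {ι : Type}
    [Fintype ι] [Nontrivial ι] (k : ι → ℕ) (hodd : ∀ i, Odd (k i)) :
    (parallelComp k).reg K ≤ (∑ i, k i / 2) * (Fintype.card K - 2) := by
  have : Nonempty ((i : ι) × Fin (k i)) := ⟨Classical.arbitrary ι, 0, (hodd _).pos⟩
  exact (parallelComp k).reg_le_of_forall_exists_degree_le
    (ParallelPaths.exists_degree_le_eval_parallelComp_eq hodd)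

/-- **Theorem 3.3.**  Let `G` be the parallel composition of `r ≥ 2` paths of odd
lengths `k 0, ..., k (r-1)`.  Then `reg G ≤ (⌊k 0/2⌋ + ... + ⌊k (r-1)/2⌋)(q-2)`,
where `q = |K|`. -/
theorem reg_parallelComp_odd_upper_bound
    (K : Type) [Field K] [Fintype K] (r : ℕ) (hr : 2 ≤ r)
    (k : Fin r → ℕ) (hk : ∀ i, 0 < k i) (hodd : ∀ i, Odd (k i)) :
    (parallelComp k).reg K ≤ (∑ i, k i / 2) * (Fintype.card K - 2) := by
  have : Nontrivial (Fin r) := Fin.nontrivial_iff_two_le.mpr hr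
  exact reg_parallelComp_odd_upper_bound_general K k hodd
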